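/- Let ℬ ⊆ ℕ be a primitive set and for N ∈ ℕ let ℬ^(N) := {b ∈ ℬ : every prime factor of b is ≤ N} and ℬ̃^(N) := {b ∈ ℬ : b has no prime factor ≤ N}. Then for every N ∈ ℕ, δ(M_{ℬ̃^(N)}) = δ(M_{ℬ̃^(N)} ∖ M_{ℬ^(N)}) + δ(M_{ℬ̃^(N)})·δ(M_{ℬ^(N)}). -/

import Mathlib

open Filter Set Topology MeasureTheory

open scoped Classical

noncomputable section

/-- The set of multiples `M_B ⊆ ℤ` of a set `B ⊆ ℕ`. -/
def multiplesZ (B : Set ℕ) : Set ℤ := {n : ℤ | ∃ b ∈ B, (b : ℤ) ∣ n}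

/-- The `B`-free integers `F_B = ℤ ∖ M_B`. -/
def freeZ (B : Set ℕ) : Set ℤ := (multiplesZ B)ᶜ

/-- The logarithmically weighted averages `(1/log n) ∑_{k=1}^n 1_A(k)/k`. -/
def logWeight (A : Set ℤ) (n : ℕ) : ℝ :=
  (Real.log n)⁻¹ * ∑ k ∈ Finset.Icc 1 n, A.indicator (fun m : ℤ => ((m : ℝ))⁻¹) (k : ℤ)

/-- The lower logarithmic density of a set `A ⊆ ℤ`. -/
def logDensLow (A : Set ℤ) : ℝ := liminf (logWeight A) atTop

/-- `A ⊆ ℤ` has logarithmic density `d`. -/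
def HasLogDensity (A : Set ℤ) (d : ℝ) : Prop := Tendsto (logWeight A) atTop (𝓝 d)

/-- `B` is primitive: no element divides another one. -/
def Primitive (B : Set ℕ) : Prop := ∀ b ∈ B, ∀ b' ∈ B, b ∣ b' → b = b'

/-- `B` is Behrend: its set of multiples has logarithmic density one. -/
def IsBehrend (B : Set ℕ) : Prop := logDensLow (multiplesZ B) = 1

/-- `B` is taut: removing any element strictly decreases the logarithmic density
of the set of multiples. -/
def IsTaut (B : Set ℕ) : Prop :=
  ∀ b ∈ B, logDensLow (multiplesZ (B \ {b})) < logDensLow (multiplesZ B)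

/-- `B̃^(N)`: the elements of `B` having no prime factor `≤ N`. -/
def Btilde (B : Set ℕ) (N : ℕ) : Set ℕ := {b ∈ B | ∀ p : ℕ, p.Prime → p ∣ b → N < p}

/-- `B^(N)`: the elements of `B` all of whose prime factors are `≤ N`. -/
def Bsmooth (B : Set ℕ) (N : ℕ) : Set ℕ := {b ∈ B | ∀ p : ℕ, p.Prime → p ∣ b → p ≤ N}


theorem liminf_lin (u v : ℕ → ℝ) (k : ℝ) (hk : 0 ≤ k)
    (hb : IsBoundedUnder (· ≤ ·) atTop u) (hb' : IsBoundedUnder (· ≥ ·) atTop u)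
    (h : Tendsto (fun n => v n - k * u n) atTop (𝓝 0)) :
    liminf v atTop = k * liminf u atTop := by
  have hm : Monotone (fun x : ℝ => k * x) := fun x y hxy => mul_le_mul_of_nonneg_left hxy hk
  have h1 := hm.map_liminf_of_continuousAt (F := atTop) u (by fun_prop)
    hb.isCoboundedUnder_ge hb'
  have hbk : IsBoundedUnder (· ≤ ·) atTop ((fun x : ℝ => k * x) ∘ u) := hm.isBoundedUnder_le_comp hb
  have hbk' : IsBoundedUnder (· ≥ ·) atTop ((fun x : ℝ => k * x) ∘ u) :=
    hm.isBoundedUnder_ge_comp hb'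
  have e : v = (fun n => v n - k * u n) + ((fun x : ℝ => k * x) ∘ u) := by
    funext n; simp
  have a1 := le_liminf_add h.isBoundedUnder_ge h.isBoundedUnder_le hbk' hbk.isCoboundedUnder_ge
  have a2 := liminf_add_le h.isBoundedUnder_ge h.isBoundedUnder_le hbk' hbk.isCoboundedUnder_ge
  rw [← e, h.liminf_eq] at a1
  rw [← e, h.limsup_eq] at a2
  rw [h1]
  linarith

/-- The unnormalised sum. -/
def logSum (A : Set ℤ) (n : ℕ) : ℝ :=
  ∑ k ∈ Finset.Icc 1 n, if (k : ℤ) ∈ A then ((k : ℝ))⁻¹ else 0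

theorem logWeight_eq (A : Set ℤ) (n : ℕ) : logWeight A n = (Real.log n)⁻¹ * logSum A n := by
  unfold logWeight logSum
  simp [Set.indicator_apply]

theorem logSum_nonneg (A : Set ℤ) (n : ℕ) : 0 ≤ logSum A n :=
  Finset.sum_nonneg fun k _ => by split_ifs <;> positivity

theorem logSum_mono {A A' : Set ℤ} (h : A ⊆ A') (n : ℕ) : logSum A n ≤ logSum A' n := by
  refine Finset.sum_le_sum fun k _ => ?_
  by_cases h1 : (k : ℤ) ∈ A
  · simp [h1, h h1]
  · simp only [h1, if_false]; split_ifs <;> positivity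

theorem logWeight_mono {A A' : Set ℤ} (h : A ⊆ A') (n : ℕ) : logWeight A n ≤ logWeight A' n := by
  rw [logWeight_eq, logWeight_eq]
  exact mul_le_mul_of_nonneg_left (logSum_mono h n) (inv_nonneg.2 (Real.log_natCast_nonneg n))

theorem logWeight_nonneg (A : Set ℤ) (n : ℕ) : 0 ≤ logWeight A n := by
  rw [logWeight_eq]
  exact mul_nonneg (inv_nonneg.2 (Real.log_natCast_nonneg n)) (logSum_nonneg A n)

theorem logSum_univ (n : ℕ) : logSum univ n = (harmonic n : ℝ) := by
  simp [logSum, harmonic_eq_sum_Icc]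

theorem tendsto_inv_log : Tendsto (fun n : ℕ => (Real.log n)⁻¹) atTop (𝓝 0) :=
  (Real.tendsto_log_atTop.comp tendsto_natCast_atTop_atTop).inv_tendsto_atTop

theorem tendsto_of_logSum_bdd (f : ℕ → ℝ) (C : ℝ) (h : ∀ n, 2 ≤ n → |f n| ≤ C) :
    Tendsto (fun n : ℕ => (Real.log n)⁻¹ * f n) atTop (𝓝 0) := by
  have h0 : Tendsto (fun n : ℕ => (Real.log n)⁻¹ * C) atTop (𝓝 0) := by
    simpa using tendsto_inv_log.mul_const C
  refine squeeze_zero_norm' ?_ h0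
  filter_upwards [eventually_ge_atTop 2] with n hn
  rw [norm_mul, Real.norm_eq_abs, Real.norm_eq_abs,
    abs_of_nonneg (inv_nonneg.2 (Real.log_natCast_nonneg n))]
  exact mul_le_mul_of_nonneg_left (h n hn) (inv_nonneg.2 (Real.log_natCast_nonneg n))

theorem logWeight_univ : Tendsto (logWeight univ) atTop (𝓝 1) := by
  have h := tendsto_of_logSum_bdd (fun n => logSum univ n - Real.log n) 1 (by
    intro n hn
    have h1 := log_add_one_le_harmonic n
    have h2 := harmonic_le_one_add_log n
    have h3 : Real.log n ≤ Real.log ((n + 1 : ℕ) : ℝ) :=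
      Real.log_le_log (by positivity) (by push_cast; linarith)
    rw [logSum_univ, abs_le]
    constructor <;> linarith)
  have h' := h.add_const 1
  rw [zero_add] at h'
  refine h'.congr' ?_
  filter_upwards [eventually_ge_atTop 2] with n hn
  have : 0 < Real.log n := Real.log_pos (by exact_mod_cast hn)
  rw [logWeight_eq]
  field_simp
  ring

theorem logWeight_bdd (A : Set ℤ) : IsBoundedUnder (· ≤ ·) atTop (logWeight A) :=
  logWeight_univ.isBoundedUnder_le.mono_le (Eventually.of_forall
    fun n => logWeight_mono (subset_univ A) n)

theorem logWeight_bdd' (A : Set ℤ) : IsBoundedUnder (· ≥ ·) atTop (logWeight A) :=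
  isBoundedUnder_of ⟨0, fun n => logWeight_nonneg A n⟩

/-- The multiples of `m`. -/
def mulSet (m : ℕ) : Set ℤ := {z | (m : ℤ) ∣ z}

def Smooth (N q : ℕ) : Prop := q ≠ 0 ∧ ∀ p : ℕ, p.Prime → p ∣ q → p ≤ N

def Invar (N : ℕ) (A : Set ℤ) : Prop :=
  ∀ q : ℕ, Smooth N q → ∀ j : ℕ, ((q * j : ℕ) : ℤ) ∈ A ↔ (j : ℤ) ∈ A

theorem logSum_mulSet {N : ℕ} {A : Set ℤ} (hA : Invar N A) {m : ℕ} (hm : Smooth N m) (n : ℕ) :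
    logSum (A ∩ mulSet m) n = (m : ℝ)⁻¹ * logSum A (n / m) := by
  have hm0 : 0 < m := Nat.pos_of_ne_zero hm.1
  unfold logSum
  rw [Finset.mul_sum]
  symm
  have hinj : Function.Injective (fun j : ℕ => m * j) := fun a b h => Nat.eq_of_mul_eq_mul_left hm0 h
  rw [← Finset.sum_subset (s₁ := (Finset.Icc 1 (n / m)).image (fun j => m * j)) (s₂ := Finset.Icc 1 n)]
  · rw [Finset.sum_image (fun a _ b _ h => hinj h)]
    refine Finset.sum_congr rfl fun j _ => ?_
    have h1 : ((m * j : ℕ) : ℤ) ∈ A ∩ mulSet m ↔ (j : ℤ) ∈ A := by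
      rw [mem_inter_iff, hA m hm j]
      refine and_iff_left ?_
      simp [mulSet]
    by_cases h2 : (j : ℤ) ∈ A
    · rw [if_pos h2, if_pos (h1.2 h2)]; push_cast; rw [mul_inv]
    · rw [if_neg h2, if_neg (fun h => h2 (h1.1 h)), mul_zero]
  · intro x hx
    obtain ⟨j, hj, rfl⟩ := Finset.mem_image.1 hx
    rw [Finset.mem_Icc] at hj ⊢
    refine ⟨Nat.mul_pos hm0 hj.1, ?_⟩
    calc m * j ≤ m * (n / m) := Nat.mul_le_mul_left _ hj.2
      _ ≤ n := Nat.mul_div_le n m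
  · intro x hx hx'
    refine if_neg fun h => hx' ?_
    have h2 : m ∣ x := by have := h.2; simpa [mulSet, Int.natCast_dvd_natCast] using this
    obtain ⟨j, rfl⟩ := h2
    rw [Finset.mem_Icc] at hx
    refine Finset.mem_image.2 ⟨j, Finset.mem_Icc.2 ⟨?_, ?_⟩, rfl⟩
    · exact Nat.pos_of_mul_pos_left hx.1
    · rw [Nat.le_div_iff_mul_le hm0, mul_comm]; exact hx.2

theorem logSum_diff (A : Set ℤ) {m : ℕ} (hm : 0 < m) (n : ℕ) :
    |logSum A (n / m) - logSum A n| ≤ m := by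
  rcases Nat.eq_zero_or_pos n with rfl | hn
  · simp
  have hsub : Finset.Icc 1 (n / m) ⊆ Finset.Icc 1 n :=
    Finset.Icc_subset_Icc le_rfl (Nat.div_le_self n m)
  have h := Finset.sum_sdiff (f := fun k : ℕ => if (k : ℤ) ∈ A then ((k : ℝ))⁻¹ else 0) hsub
  have h' : logSum A (n / m) - logSum A n = -∑ k ∈ Finset.Icc 1 n \ Finset.Icc 1 (n / m),
      (if (k : ℤ) ∈ A then ((k : ℝ))⁻¹ else 0) := by
    unfold logSum; linarith
  rw [h', abs_neg, abs_of_nonneg (Finset.sum_nonneg fun k _ => by split_ifs <;> positivity)]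
  calc _ ≤ ∑ k ∈ Finset.Icc 1 n \ Finset.Icc 1 (n / m), ((m : ℝ) / n) := by
        refine Finset.sum_le_sum fun k hk => ?_
        rw [Finset.mem_sdiff, Finset.mem_Icc, Finset.mem_Icc] at hk
        have hk1 : n / m < k := by
          by_contra hc; exact hk.2 ⟨hk.1.1, not_lt.1 hc⟩
        have hk2 : n < k * m := (Nat.div_lt_iff_lt_mul hm).1 hk1
        have hk3 : (n : ℝ) ≤ k * m := by exact_mod_cast hk2.le
        have hk0 : (0 : ℝ) < k := by exact_mod_cast hk.1.1
        have hn0 : (0 : ℝ) < n := by exact_mod_cast hn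
        split_ifs
        · rw [inv_eq_one_div, div_le_div_iff₀ hk0 hn0]; linarith
        · positivity
    _ ≤ ∑ k ∈ Finset.Icc 1 n, ((m : ℝ) / n) :=
        Finset.sum_le_sum_of_subset_of_nonneg Finset.sdiff_subset fun _ _ _ => by positivity
    _ = m := by
        have hn0 : (n : ℝ) ≠ 0 := by positivity
        simp
        field_simp

theorem key_mul {N : ℕ} {m : ℕ} (hm : Smooth N m) {A : Set ℤ} (hA : Invar N A) :
    Tendsto (fun n => logWeight (A ∩ mulSet m) n - (m : ℝ)⁻¹ * logWeight A n) atTop (𝓝 0) := by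
  have hm0 : 0 < m := Nat.pos_of_ne_zero hm.1
  refine (tendsto_of_logSum_bdd (fun n => (m : ℝ)⁻¹ * (logSum A (n / m) - logSum A n)) 1 ?_).congr ?_
  · intro n _
    have h := logSum_diff A hm0 n
    have hm1 : (0 : ℝ) < m := by exact_mod_cast hm0
    rw [abs_mul, abs_of_pos (inv_pos.2 hm1)]
    calc _ ≤ (m : ℝ)⁻¹ * m := mul_le_mul_of_nonneg_left h (inv_pos.2 hm1).le
      _ = 1 := by field_simp
  · intro n
    rw [logWeight_eq, logWeight_eq, logSum_mulSet hA hm]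
    ring

theorem Smooth.lcm {N a b : ℕ} (ha : Smooth N a) (hb : Smooth N b) : Smooth N (Nat.lcm a b) := by
  refine ⟨Nat.lcm_ne_zero ha.1 hb.1, fun p hp h => ?_⟩
  rcases (Nat.Prime.dvd_mul hp).1 (h.trans (Nat.lcm_dvd_mul a b)) with h | h
  · exact ha.2 p hp h
  · exact hb.2 p hp h

theorem logWeight_union_inter (A A' : Set ℤ) (n : ℕ) :
    logWeight (A ∪ A') n = logWeight A n + logWeight A' n - logWeight (A ∩ A') n := by
  simp only [logWeight_eq, logSum]
  rw [← mul_add, ← mul_sub, ← Finset.sum_add_distrib, ← Finset.sum_sub_distrib]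
  congr 1
  refine Finset.sum_congr rfl fun k _ => ?_
  by_cases h1 : (k : ℤ) ∈ A <;> by_cases h2 : (k : ℤ) ∈ A' <;> simp [h1, h2]

theorem logWeight_sdiff (A A' : Set ℤ) (n : ℕ) :
    logWeight (A \ A') n = logWeight A n - logWeight (A ∩ A') n := by
  simp only [logWeight_eq, logSum]
  rw [← mul_sub, ← Finset.sum_sub_distrib]
  congr 1
  refine Finset.sum_congr rfl fun k _ => ?_
  by_cases h1 : (k : ℤ) ∈ A <;> by_cases h2 : (k : ℤ) ∈ A' <;> simp [h1, h2]

theorem key_fin (N : ℕ) (S : Finset ℕ) : (∀ b ∈ S, Smooth N b) → ∀ m, Smooth N m →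
    ∃ c : ℝ, ∀ A : Set ℤ, Invar N A →
      Tendsto (fun n => logWeight (A ∩ mulSet m ∩ multiplesZ (S : Set ℕ)) n - c * logWeight A n)
        atTop (𝓝 0) := by
  induction S using Finset.induction_on with
  | empty =>
    intro _ m _
    refine ⟨0, fun A _ => ?_⟩
    have : multiplesZ (∅ : Set ℕ) = ∅ := by ext; simp [multiplesZ]
    simp [this, logWeight_eq, logSum]
  | insert b S hb ih =>
    intro hS m hm
    have hbs : Smooth N b := hS b (Finset.mem_insert_self b S)
    have hS' : ∀ b ∈ S, Smooth N b := fun x hx => hS x (Finset.mem_insert_of_mem hx)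
    have hl := hm.lcm hbs
    obtain ⟨c1, h1⟩ := ih hS' m hm
    obtain ⟨c2, h2⟩ := ih hS' _ hl
    refine ⟨c1 + ((Nat.lcm m b : ℕ) : ℝ)⁻¹ - c2, fun A hA => ?_⟩
    have h3 := ((h1 A hA).add (key_mul hl hA)).sub (h2 A hA)
    rw [add_zero, sub_zero] at h3
    refine h3.congr fun n => ?_
    have hlm : ∀ z : ℤ, z ∈ mulSet (Nat.lcm m b) ↔ z ∈ mulSet m ∧ z ∈ mulSet b := by
      intro z
      simp only [mulSet, mem_ofPred_eq, Int.natCast_dvd]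
      exact Nat.lcm_dvd_iff
    have hins : ∀ z : ℤ, z ∈ multiplesZ ((insert b S : Finset ℕ) : Set ℕ) ↔
        z ∈ mulSet b ∨ z ∈ multiplesZ (S : Set ℕ) := by
      intro z; simp [multiplesZ, mulSet]
    have e1 : A ∩ mulSet m ∩ multiplesZ ((insert b S : Finset ℕ) : Set ℕ) =
        (A ∩ mulSet m ∩ multiplesZ (S : Set ℕ)) ∪ (A ∩ mulSet (Nat.lcm m b)) := by
      ext z; simp only [mem_union, mem_inter_iff, hlm, hins]; tauto
    have e2 : (A ∩ mulSet m ∩ multiplesZ (S : Set ℕ)) ∩ (A ∩ mulSet (Nat.lcm m b)) =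
        A ∩ mulSet (Nat.lcm m b) ∩ multiplesZ (S : Set ℕ) := by
      ext z; simp only [mem_inter_iff, hlm]; tauto
    rw [e1, logWeight_union_inter, e2]
    ring

theorem Bsmooth_finite (B : Set ℕ) (hB0 : 0 ∉ B) (hprim : Primitive B) (N : ℕ) :
    (Bsmooth B N).Finite := by
  by_contra hinf
  have hinf : (Bsmooth B N).Infinite := hinf
  let g := hinf.natEmbedding
  let f : ℕ → (Fin (N + 1) → ℕ) := fun i p => (g i : ℕ).factorization p
  obtain ⟨i, j, hij, hle⟩ := wellQuasiOrdered_le f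
  have hne : ∀ i, (g i : ℕ) ≠ 0 := fun i h => hB0 (h ▸ (g i).2.1)
  have hd : (g i : ℕ) ∣ g j := by
    rw [← Nat.factorization_prime_le_iff_dvd (hne i) (hne j)]
    intro p hp
    by_cases hpd : p ∣ (g i : ℕ)
    · have hpN := (g i).2.2 p hp hpd
      exact hle ⟨p, Nat.lt_succ_of_le hpN⟩
    · rw [Nat.factorization_eq_zero_of_not_dvd hpd]; exact Nat.zero_le _
  have := hprim _ (g i).2.1 _ (g j).2.1 hd
  exact hij.ne (g.injective (Subtype.ext this))

theorem Btilde_invar (B : Set ℕ) (N : ℕ) : Invar N (multiplesZ (Btilde B N)) := by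
  intro q hq j
  simp only [multiplesZ, mem_ofPred_eq, Int.natCast_dvd_natCast]
  refine exists_congr fun b => and_congr_right fun hb => ?_
  have hc : Nat.Coprime b q := by
    refine Nat.coprime_of_dvd fun p hp h1 h2 => ?_
    exact absurd (hq.2 p hp h2) (not_le.2 (hb.2 p hp h1))
  exact hc.dvd_mul_left

/-- `δ(M_{B̃^(N)}) = δ(M_{B̃^(N)} ∖ M_{B^(N)}) + δ(M_{B̃^(N)})·δ(M_{B^(N)})`. -/
theorem logDensity_btilde_decomposition (B : Set ℕ) (hB0 : 0 ∉ B) (hprim : Primitive B)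
    (N : ℕ) :
    logDensLow (multiplesZ (Btilde B N)) =
      logDensLow (multiplesZ (Btilde B N) \ multiplesZ (Bsmooth B N)) +
        logDensLow (multiplesZ (Btilde B N)) * logDensLow (multiplesZ (Bsmooth B N)) := by
  have hfin := Bsmooth_finite B hB0 hprim N
  have hS : ∀ b ∈ hfin.toFinset, Smooth N b := fun b hb => by
    rw [Set.Finite.mem_toFinset] at hb
    exact ⟨fun h => hB0 (h ▸ hb.1), hb.2⟩
  obtain ⟨c, hc⟩ := key_fin N hfin.toFinset hS 1
    ⟨one_ne_zero, fun p hp h => absurd (Nat.dvd_one.1 h) hp.ne_one⟩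
  have h1 : mulSet 1 = univ := by ext; simp [mulSet]
  simp only [h1, inter_univ, Set.Finite.coe_toFinset] at hc
  have hU := hc univ (fun q _ j => by simp)
  have hT := hc _ (Btilde_invar B N)
  rw [univ_inter] at hU
  have hSl : Tendsto (logWeight (multiplesZ (Bsmooth B N))) atTop (𝓝 c) := by
    have h := hU.add (logWeight_univ.const_mul c)
    simpa using h
  have hc1 : c ≤ 1 := le_of_tendsto_of_tendsto' hSl logWeight_univ
    (fun n => logWeight_mono (subset_univ _) n)
  have hd : logDensLow (multiplesZ (Bsmooth B N)) = c := hSl.liminf_eq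
  have hmain : logDensLow (multiplesZ (Btilde B N) \ multiplesZ (Bsmooth B N)) =
      (1 - c) * logDensLow (multiplesZ (Btilde B N)) := by
    refine liminf_lin _ _ _ (by linarith) (logWeight_bdd _) (logWeight_bdd' _) ?_
    have h := hT.neg
    rw [neg_zero] at h
    refine h.congr fun n => ?_
    rw [logWeight_sdiff]
    ring
  rw [hd, hmain]
  ring
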